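/- (Local to global structure) Let X and Y be independent finitely supported random variables on G = 𝔽₂ⁿ, and suppose we are given couplings (X, U) and (Y, W), where the pair (X, U) is independent of the pair (Y, W). For u ∈ supp U and w ∈ supp W, set X_u = (X | U = u) and Y_w = (Y | W = w). Suppose that for every such u, w we are given a subspace V(u, w) ⊆ G such that 𝔼_{u∼U, w∼W} s[X_u | π_{V(u,w)}(X_u); Y_w | π_{V(u,w)}(Y_w)] ≥ ζ (H[X] + H[Y]) for some ζ > 0. Then there exists a subspace V̄ ⊆ G with H[𝐔_{V̄}] ≤ (8/ζ²) 𝔼_{u∼U, w∼W} H[𝐔_{V(u,w)}] and H[Y | π_{V̄}(Y)] ≥ (ζ/4)(H[X] + H[Y]). -/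

import Mathlib

open Real Pointwise

noncomputable section

abbrev Fvec (n : ℕ) : Type := Fin n → ZMod 2

/-- Shannon entropy (natural log) of a finitely supported distribution. -/
def ent {A : Type*} (p : A → ℝ) : ℝ := ∑ᶠ a, Real.negMulLog (p a)

/-- `p` is a (finitely supported) probability distribution. -/
def IsDist {A : Type*} (p : A → ℝ) : Prop := (∀ a, 0 ≤ p a) ∧ ∑ᶠ a, p a = 1

/-- Pushforward of a distribution along a map: the distribution of `f(X)` for `X ∼ p`. -/
def push {A B : Type*} (f : A → B) (p : A → ℝ) : B → ℝ := fun b => ∑ᶠ a ∈ f ⁻¹' {b}, p a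

/-- Joint distribution of a pair of independent random variables. -/
def prodDist {A B : Type*} (p : A → ℝ) (q : B → ℝ) : A × B → ℝ := fun z => p z.1 * q z.2

/-- Distribution of `X + Y` for independent `X ∼ p`, `Y ∼ q`. -/
def conv {A : Type*} [AddGroup A] (p q : A → ℝ) : A → ℝ := fun z => ∑ᶠ x, p x * q (z - x)

/-- The distribution of `X` conditioned on `U = b`, where `r` is the joint distribution of `(X, U)`. -/
def fiber {A B : Type*} (r : A × B → ℝ) (b : B) : A → ℝ := fun a => r (a, b) / push Prod.snd r b

/-- Conditional entropy `H[X | U]` of a joint distribution `r` of `(X, U)`. -/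
def condEnt {A B : Type*} (r : A × B → ℝ) : ℝ := ∑ᶠ b, push Prod.snd r b * ent (fiber r b)

/-- Doubling mass `s[X ; Y]` (of independent copies with distributions `p`, `q`). -/
def sDouble {A : Type*} [AddGroup A] (p q : A → ℝ) : ℝ := ent p + ent q - ent (conv p q)

/-- Conditional doubling mass `s[X | U ; Y | W] = 𝔼_{u ∼ U, w ∼ W} s[X_u ; Y_w]`,
where `r1`, `r2` are the joint distributions of `(X, U)` and `(Y, W)`. -/
def sCond {A U W : Type*} [AddGroup A] (r1 : A × U → ℝ) (r2 : A × W → ℝ) : ℝ :=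
  ∑ᶠ u, ∑ᶠ w, push Prod.snd r1 u * push Prod.snd r2 w * sDouble (fiber r1 u) (fiber r2 w)

/-- Conditional mutual information `I[A : B | S]` of a joint distribution of `(A, B, S)`. -/
def condMI {A B S : Type*} (r : A × B × S → ℝ) : ℝ :=
  ent (push (fun z => (z.1, z.2.2)) r) + ent (push (fun z => z.2) r)
    - ent r - ent (push (fun z => z.2.2) r)

/-- Uniform distribution on a set. -/
def unifOn {A : Type*} (s : Set A) : A → ℝ := s.indicator fun _ => (Nat.card s : ℝ)⁻¹

/-- Entropic Ruzsa distance `d[X ; Y]`. -/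
def dRuzsa {A : Type*} [AddGroup A] (p q : A → ℝ) : ℝ := ent (conv p q) - ent p / 2 - ent q / 2

/-- Joint distribution of `(X, X + Y)` for independent `X ∼ p`, `Y ∼ q`. -/
def jointSum {A : Type*} [AddGroup A] (p q : A → ℝ) : A × A → ℝ :=
  push (fun z : A × A => (z.1, z.1 + z.2)) (prodDist p q)

/-- Joint distribution of `(X, π_V(X))`. -/
def selfProj {n : ℕ} (V : Submodule (ZMod 2) (Fvec n)) (p : Fvec n → ℝ) :
    Fvec n × (Fvec n ⧸ V) → ℝ := push (fun x => (x, V.mkQ x)) p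

/-- Joint distribution of independent `(X₁, X₂, Y₁, Y₂)` with `X₁, X₂ ∼ p` and `Y₁, Y₂ ∼ q`. -/
def quad {A : Type*} (p q : A → ℝ) : A × A × A × A → ℝ :=
  fun z => p z.1 * p z.2.1 * q z.2.2.1 * q z.2.2.2

/-- Distribution of `X₁ + ⋯ + X_k` for independent `Xᵢ ∼ p i`. -/
def indepSum {A : Type*} [AddCommGroup A] (k : ℕ) (p : Fin k → A → ℝ) : A → ℝ :=
  push (fun x : Fin k → A => ∑ i, x i) (fun x => ∏ i, p i (x i))

/-- Statement `A(η, L, c)` from the paper. -/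
def StA (η L c : ℝ) : Prop :=
  ∀ (n : ℕ) (p q : Fvec n → ℝ), IsDist p → IsDist q →
    ent (conv p q) ≤ (1 - η) * (ent p + ent q) →
    ∃ V : Submodule (ZMod 2) (Fvec n),
      ent (unifOn (V : Set (Fvec n))) ≤ L * (ent p + ent q) ∧
      ent (push V.mkQ p) + ent (push V.mkQ q) ≤ (1 - c) * (ent p + ent q)

/-- Statement `B(η, ε, L)` from the paper. -/
def StB (η ε L : ℝ) : Prop :=
  ∀ (n : ℕ) (p q : Fvec n → ℝ), IsDist p → IsDist q →
    ∃ V : Submodule (ZMod 2) (Fvec n),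
      ent (unifOn (V : Set (Fvec n))) ≤ L * (ent p + ent q) ∧
      ent (conv (push V.mkQ p) (push V.mkQ q)) ≥
        (1 - η) * (ent (push V.mkQ p) + ent (push V.mkQ q)) - ε * (ent p + ent q)

/-!
Average over `u` to find one `u` for which the doubling mass is large on average over `w`, while
`H[X_u]` and `𝔼_w H[𝐔_{V(u,w)}]` are both controlled. For this `u` and a suitable `l > 0`, choose
the subspace `T` minimising `H[π_T(X_u)] + l H[𝐔_T]`. Comparing `T` with `0` gives
`l H[𝐔_T] ≤ H[X_u]`, and comparing it with `T + V` gives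
`H[π_T(X_u)] - H[π_{T+V}(X_u)] ≤ l H[𝐔_V]` for every `V`.

Two applications of submodularity to independent `X`, `Y` show that
`s[X | π_V(X); Y | π_V(Y)] ≤ H[Y | π_T(Y)] + (H[π_T(X)] - H[π_{T+V}(X)])`: since `X + Y` is known,
`π_T(X)` determines `π_T(Y)`, while `π_V(X)` and `π_T(X)` each determine `π_{T+V}(X)`.
Taking `X = X_u`, `Y = Y_w` and averaging over `w`, the last term is at most `l 𝔼_w H[𝐔_{V(u,w)}]`,
and `𝔼_w H[Y_w | π_T(Y_w)] ≤ H[Y | π_T(Y)]` because conditioning reduces entropy.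
-/

/-- The expectation `𝔼 F(X)` for `X ∼ p`. It is given its intended meaning only for finitely
supported `p`, being a `finsum`. -/
def expect {A : Type*} (p F : A → ℝ) : ℝ := ∑ᶠ a, p a * F a

section Expectation

variable {A : Type*} {p q F G : A → ℝ}

theorem IsDist.hasFiniteSupport (hp : IsDist p) : p.HasFiniteSupport :=
  hasFiniteSupport_of_finsum_eq_one hp.2

theorem IsDist.pos_of_ne_zero (hp : IsDist p) {a : A} (ha : p a ≠ 0) : 0 < p a :=
  (hp.1 a).lt_of_ne' ha

theorem IsDist.le_one (hp : IsDist p) (a : A) : p a ≤ 1 :=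
  hp.2 ▸ single_le_finsum a hp.hasFiniteSupport hp.1

theorem expect_congr (h : ∀ a, p a ≠ 0 → F a = G a) : expect p F = expect p G :=
  finsum_congr fun a => by
    by_cases ha : p a = 0
    · simp only [ha, zero_mul]
    · rw [h a ha]

theorem expect_mono (hp : IsDist p) (h : ∀ a, p a ≠ 0 → F a ≤ G a) :
    expect p F ≤ expect p G := by
  have := hp.hasFiniteSupport
  refine finsum_le_finsum' (by fun_prop) (by fun_prop) fun a => ?_
  by_cases ha : p a = 0
  · simp only [ha, zero_mul, le_refl]
  · exact mul_le_mul_of_nonneg_left (h a ha) (hp.1 a)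

theorem expect_add (hp : p.HasFiniteSupport) :
    expect p (fun a => F a + G a) = expect p F + expect p G := by
  simp only [expect, mul_add]
  exact finsum_add_distrib (by fun_prop) (by fun_prop)

theorem expect_sub (hp : p.HasFiniteSupport) :
    expect p (fun a => F a - G a) = expect p F - expect p G := by
  simp only [expect, mul_sub]
  exact finsum_sub_distrib (by fun_prop) (by fun_prop)

theorem expect_const_mul (c : ℝ) : expect p (fun a => c * F a) = c * expect p F := by
  simp only [expect, mul_left_comm _ c, mul_finsum]

theorem expect_const (hp : IsDist p) (c : ℝ) : expect p (fun _ => c) = c := by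
  rw [expect, ← finsum_mul, hp.2, one_mul]

theorem expect_nonneg (hp : ∀ a, 0 ≤ p a) (hF : ∀ a, 0 ≤ F a) : 0 ≤ expect p F :=
  finsum_nonneg fun a => mul_nonneg (hp a) (hF a)

theorem exists_le_of_le_expect (hp : IsDist p) {c : ℝ} (h : c ≤ expect p F) :
    ∃ a, p a ≠ 0 ∧ c ≤ F a := by
  by_contra! hlt
  obtain ⟨a, ha⟩ : ∃ a, p a ≠ 0 := by
    by_contra! h0
    simpa [h0] using hp.2
  have hfin := hp.hasFiniteSupport
  have hsum : 0 < ∑ᶠ a, p a * (c - F a) := by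
    refine finsum_pos (fun b => ?_) ⟨a, ?_⟩ (by fun_prop)
    · by_cases hb : p b = 0
      · simp only [hb, zero_mul, le_refl]
      · exact mul_nonneg (hp.1 b) (sub_nonneg.2 (hlt b hb).le)
    · exact mul_pos (hp.pos_of_ne_zero ha) (sub_pos.2 (hlt a ha))
  change 0 < expect p (fun a => c - F a) at hsum
  rw [expect_sub hfin, expect_const hp] at hsum
  linarith

theorem expect_ite_eq [DecidableEq A] (p : A → ℝ) (a : A) :
    expect p (fun b => if b = a then 1 else 0) = p a := by
  rw [expect, finsum_eq_single _ a fun b hb => by rw [if_neg hb, mul_zero], if_pos rfl, mul_one]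

theorem eq_of_forall_expect_eq (h : ∀ F, expect p F = expect q F) : p = q := by
  classical
  funext a
  rw [← expect_ite_eq p a, h, expect_ite_eq]

end Expectation

section Push

variable {A B C : Type*} {p : A → ℝ}

theorem hasFiniteSupport_push (f : A → B) (hp : p.HasFiniteSupport) :
    (push f p).HasFiniteSupport := by
  refine (hp.image f).subset fun b hb => ?_
  obtain ⟨a, hab, ha⟩ := exists_ne_zero_of_finsum_mem_ne_zero hb
  exact ⟨a, ha, hab⟩

theorem expect_push (f : A → B) (hp : p.HasFiniteSupport) (F : B → ℝ) :
    expect (push f p) F = expect p (fun a => F (f a)) := by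
  classical
  have hpush : ∀ b, push f p b * F b = ∑ a ∈ hp.toFinset with f a = b, p a * F (f a) := fun b => by
    rw [push, finsum_mem_eq_sum_filter _ _ hp, Finset.sum_mul]
    exact Finset.sum_congr rfl fun a ha => by rw [(Finset.mem_filter.1 ha).2]
  simp only [expect, hpush]
  rw [finsum_eq_finsetSum_of_support_subset (s := hp.toFinset.image f),
    finsum_eq_finsetSum_of_support_subset (s := hp.toFinset)]
  · exact Finset.sum_fiberwise_of_maps_to (fun a ha => Finset.mem_image_of_mem f ha) _
  · rw [hp.coe_toFinset]
    exact Function.support_mul_subset_left _ _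
  · intro b hb
    obtain ⟨a, ha, -⟩ := Finset.exists_ne_zero_of_sum_ne_zero hb
    rw [Finset.mem_filter] at ha
    exact Finset.mem_image.2 ⟨a, ha⟩

theorem push_apply_eq_expect [DecidableEq B] (f : A → B) (hp : p.HasFiniteSupport) (b : B) :
    push f p b = expect p (fun a => if f a = b then 1 else 0) := by
  rw [← expect_ite_eq (push f p), expect_push f hp]

theorem push_id (p : A → ℝ) : push id p = p := by
  funext a
  simp [push]

theorem push_push (f : A → B) (g : B → C) (hp : p.HasFiniteSupport) :
    push g (push f p) = push (g ∘ f) p :=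
  eq_of_forall_expect_eq fun F => by
    rw [expect_push g (hasFiniteSupport_push f hp), expect_push f hp, expect_push (g ∘ f) hp]
    rfl

theorem push_apply_of_injective {f : A → B} (hf : f.Injective) (p : A → ℝ) (a : A) :
    push f p (f a) = p a := by
  have hpre : f ⁻¹' {f a} = {a} := by
    ext b
    exact hf.eq_iff
  rw [push, hpre, finsum_mem_singleton]

theorem isDist_push (hp : IsDist p) (f : A → B) : IsDist (push f p) := by
  refine ⟨fun b => finsum_nonneg fun a => finsum_nonneg fun _ => hp.1 a, ?_⟩
  have htotal := expect_push f hp.hasFiniteSupport fun _ => 1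
  rw [expect_const hp] at htotal
  simpa only [expect, mul_one] using htotal

theorem le_push_apply (hp : IsDist p) (f : A → B) (a : A) : p a ≤ push f p (f a) := by
  classical
  rw [push_apply_eq_expect f hp.hasFiniteSupport, ← expect_ite_eq p a]
  refine expect_mono hp fun b _ => ?_
  by_cases hb : b = a
  · simp [hb]
  · rw [if_neg hb]
    positivity

theorem push_apply_pos (hp : IsDist p) (f : A → B) {a : A} (ha : p a ≠ 0) :
    0 < push f p (f a) :=
  (hp.pos_of_ne_zero ha).trans_le (le_push_apply hp f a)

end Push

section Prod

variable {A B C D : Type*} {p : A → ℝ} {q : B → ℝ}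

theorem hasFiniteSupport_prodDist (hp : p.HasFiniteSupport) (hq : q.HasFiniteSupport) :
    (prodDist p q).HasFiniteSupport :=
  (hp.prod hq).subset fun _ hz => ⟨left_ne_zero_of_mul hz, right_ne_zero_of_mul hz⟩

theorem expect_prodDist (hp : p.HasFiniteSupport) (hq : q.HasFiniteSupport) (F : A × B → ℝ) :
    expect (prodDist p q) F = expect p (fun a => expect q (fun b => F (a, b))) := by
  have hpq := hasFiniteSupport_prodDist hp hq
  rw [expect, finsum_curry _ (by fun_prop)]
  simp only [expect, prodDist, mul_finsum, mul_assoc]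

theorem isDist_prodDist (hp : IsDist p) (hq : IsDist q) : IsDist (prodDist p q) := by
  refine ⟨fun z => mul_nonneg (hp.1 _) (hq.1 _), ?_⟩
  have htotal := expect_prodDist hp.hasFiniteSupport hq.hasFiniteSupport fun _ => 1
  simp only [expect_const hq, expect_const hp] at htotal
  simpa only [expect, mul_one] using htotal

theorem push_prodMap_prodDist (hp : p.HasFiniteSupport) (hq : q.HasFiniteSupport)
    (f : A → C) (g : B → D) :
    push (Prod.map f g) (prodDist p q) = prodDist (push f p) (push g q) :=
  eq_of_forall_expect_eq fun F => by
    rw [expect_push _ (hasFiniteSupport_prodDist hp hq), expect_prodDist hp hq,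
      expect_prodDist (hasFiniteSupport_push f hp) (hasFiniteSupport_push g hq), expect_push f hp]
    simp only [expect_push g hq, Prod.map]

theorem push_comp_fst_prodDist (hp : p.HasFiniteSupport) (hq : IsDist q) (f : A → C) :
    push (fun z => f z.1) (prodDist p q) = push f p :=
  eq_of_forall_expect_eq fun F => by
    rw [expect_push _ (hasFiniteSupport_prodDist hp hq.hasFiniteSupport),
      expect_prodDist hp hq.hasFiniteSupport, expect_push f hp]
    simp only [expect_const hq]

theorem push_comp_snd_prodDist (hp : IsDist p) (hq : q.HasFiniteSupport) (g : B → C) :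
    push (fun z => g z.2) (prodDist p q) = push g q :=
  eq_of_forall_expect_eq fun F => by
    rw [expect_push _ (hasFiniteSupport_prodDist hp.hasFiniteSupport hq),
      expect_prodDist hp.hasFiniteSupport hq, expect_push g hq]
    exact expect_const hp (expect q fun b => F (g b))

theorem conv_eq_push [AddCommGroup A] {q : A → ℝ} (hp : p.HasFiniteSupport)
    (hq : q.HasFiniteSupport) : conv p q = push (fun z => z.1 + z.2) (prodDist p q) := by
  classical
  funext z
  rw [push_apply_eq_expect _ (hasFiniteSupport_prodDist hp hq), expect_prodDist hp hq]
  simp only [← eq_sub_iff_add_eq', expect_ite_eq]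
  rfl

end Prod

section Fiber

variable {A B C D : Type*} {r : A × B → ℝ}

theorem hasFiniteSupport_fiber (hr : r.HasFiniteSupport) (b : B) :
    (fiber r b).HasFiniteSupport :=
  (hr.image Prod.fst).subset fun a ha => ⟨(a, b), fun h => ha (by simp [fiber, h]), rfl⟩

theorem expect_fiber [DecidableEq B] (r : A × B → ℝ) (b : B) (F : A → ℝ) :
    expect (fiber r b) F =
      expect r (fun z => if z.2 = b then F z.1 else 0) / push Prod.snd r b := by
  have hslice : expect r (fun z => if z.2 = b then F z.1 else 0) = ∑ᶠ a, r (a, b) * F a := by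
    rw [← finsum_mem_range (f := fun z : A × B => r z * F z.1) (Prod.mk_left_injective b),
      finsum_mem_def]
    refine finsum_congr fun ⟨a, c⟩ => ?_
    by_cases hc : c = b
    · simp [hc]
    · simp [hc, Ne.symm hc]
  rw [hslice, div_eq_mul_inv, finsum_mul]
  exact finsum_congr fun a => by rw [fiber, div_eq_mul_inv, mul_right_comm]

theorem push_snd_mul_fiber (hr : IsDist r) (a : A) (b : B) :
    push Prod.snd r b * fiber r b a = r (a, b) := by
  refine mul_div_cancel_of_imp' fun h0 => le_antisymm ?_ (hr.1 _)
  exact h0 ▸ le_push_apply hr Prod.snd (a, b)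

theorem expect_eq_expect_fiber (hr : IsDist r) (F : A × B → ℝ) :
    expect r F = expect (push Prod.snd r) (fun b => expect (fiber r b) (fun a => F (a, b))) := by
  have hfin := hr.hasFiniteSupport.subset (Function.support_mul_subset_left r F)
  have hswap := hfin.preimage (Equiv.prodComm B A).injective.injOn
  rw [expect, ← finsum_comp_equiv (Equiv.prodComm B A), finsum_curry _ hswap]
  simp only [expect, mul_finsum, ← mul_assoc, push_snd_mul_fiber hr]
  rfl

theorem isDist_fiber (hr : IsDist r) {b : B} (hb : push Prod.snd r b ≠ 0) :
    IsDist (fiber r b) := by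
  classical
  refine ⟨fun a => div_nonneg (hr.1 _) ((isDist_push hr _).1 b), ?_⟩
  have htotal := expect_fiber r b fun _ => 1
  rw [← push_apply_eq_expect Prod.snd hr.hasFiniteSupport, div_self hb] at htotal
  simpa only [expect, mul_one] using htotal

theorem fiber_push_prodMap (hr : r.HasFiniteSupport) (f : A → C) (b : B) :
    fiber (push (Prod.map f id) r) b = push f (fiber r b) := by
  classical
  refine eq_of_forall_expect_eq fun F => ?_
  rw [expect_push f (hasFiniteSupport_fiber hr b), expect_fiber, expect_fiber, expect_push _ hr,
    push_push _ _ hr]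
  rfl

theorem push_prodProdProdComm_prodDist_snd {r₁ : A × C → ℝ} {r₂ : B × D → ℝ}
    (hr₁ : r₁.HasFiniteSupport) (hr₂ : r₂.HasFiniteSupport) :
    push Prod.snd (push (Equiv.prodProdProdComm A C B D) (prodDist r₁ r₂)) =
      prodDist (push Prod.snd r₁) (push Prod.snd r₂) := by
  rw [← push_prodMap_prodDist hr₁ hr₂, push_push _ _ (hasFiniteSupport_prodDist hr₁ hr₂)]
  rfl

theorem fiber_push_prodProdProdComm_prodDist {r₁ : A × C → ℝ} {r₂ : B × D → ℝ}
    (hr₁ : r₁.HasFiniteSupport) (hr₂ : r₂.HasFiniteSupport) (c : C) (d : D) :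
    fiber (push (Equiv.prodProdProdComm A C B D) (prodDist r₁ r₂)) (c, d) =
      prodDist (fiber r₁ c) (fiber r₂ d) := by
  funext ⟨a, b⟩
  have hjoint : push (Equiv.prodProdProdComm A C B D) (prodDist r₁ r₂) ((a, b), (c, d)) =
      r₁ (a, c) * r₂ (b, d) :=
    push_apply_of_injective (Equiv.injective _) (prodDist r₁ r₂) ((a, c), (b, d))
  rw [fiber, hjoint, push_prodProdProdComm_prodDist_snd hr₁ hr₂, prodDist, mul_div_mul_comm]
  rfl

end Fiber

section Entropy

variable {A B C : Type*} {p : A → ℝ}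

theorem ent_eq_expect (p : A → ℝ) : ent p = expect p (fun a => -log (p a)) :=
  finsum_congr fun a => by rw [negMulLog, neg_mul, mul_neg]

theorem ent_push (f : A → B) (hp : p.HasFiniteSupport) :
    ent (push f p) = expect p (fun a => -log (push f p (f a))) := by
  rw [ent_eq_expect, expect_push f hp]

theorem ent_push_congr (hp : p.HasFiniteSupport) {f : A → B} {g : A → C}
    (h : ∀ a b, p a ≠ 0 → p b ≠ 0 → (f a = f b ↔ g a = g b)) :
    ent (push f p) = ent (push g p) := by
  classical
  rw [ent_push f hp, ent_push g hp]
  refine expect_congr fun a ha => ?_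
  rw [push_apply_eq_expect f hp, push_apply_eq_expect g hp,
    expect_congr fun b hb => if_congr (h b a hb ha) rfl rfl]

theorem ent_push_of_injective {f : A → B} (hf : f.Injective) (hp : p.HasFiniteSupport) :
    ent (push f p) = ent p := by
  simp only [ent_push f hp, push_apply_of_injective hf, ent_eq_expect]

theorem ent_nonneg (hp : IsDist p) : 0 ≤ ent p :=
  finsum_nonneg fun a => negMulLog_nonneg (hp.1 a) (hp.le_one a)

theorem ent_prodDist {q : B → ℝ} (hp : IsDist p) (hq : IsDist q) :
    ent (prodDist p q) = ent p + ent q := by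
  have hlog : ∀ a, p a ≠ 0 →
      expect q (fun b => -log (prodDist p q (a, b))) = -log (p a) + ent q := by
    intro a ha
    rw [ent_eq_expect q, ← expect_const hq (-log (p a)), ← expect_add hq.hasFiniteSupport]
    exact expect_congr fun b hb => by rw [prodDist, log_mul ha hb, neg_add]
  rw [ent_eq_expect, expect_prodDist hp.hasFiniteSupport hq.hasFiniteSupport, expect_congr hlog,
    expect_add hp.hasFiniteSupport, expect_const hp, ← ent_eq_expect]

theorem ent_le_expect_neg_log {q : A → ℝ} (hp : IsDist p) (hq : IsDist q)
    (hac : ∀ a, p a ≠ 0 → q a ≠ 0) : ent p ≤ expect p (fun a => -log (q a)) := by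
  have hratio : expect p (fun a => q a / p a) ≤ 1 := by
    have hfin := hp.hasFiniteSupport
    rw [← hq.2]
    refine finsum_le_finsum' (by fun_prop) hq.hasFiniteSupport fun a => ?_
    by_cases ha : p a = 0
    · simpa only [ha, zero_mul] using hq.1 a
    · exact (mul_div_cancel₀ _ ha).le
  have hlog : expect p (fun a => -log (p a) - -log (q a)) ≤ expect p (fun a => q a / p a - 1) := by
    refine expect_mono hp fun a ha => ?_
    have hle := log_le_sub_one_of_pos
      (div_pos (hq.pos_of_ne_zero (hac a ha)) (hp.pos_of_ne_zero ha))
    rw [log_div (hac a ha) ha] at hle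
    linarith
  rw [expect_sub hp.hasFiniteSupport, expect_sub hp.hasFiniteSupport, expect_const hp,
    ← ent_eq_expect] at hlog
  linarith

theorem ent_le_ent_push_fst_add_ent_push_snd {r : A × B → ℝ} (hr : IsDist r) :
    ent r ≤ ent (push Prod.fst r) + ent (push Prod.snd r) := by
  have hfst := fun z (hz : r z ≠ 0) => (push_apply_pos hr Prod.fst hz).ne'
  have hsnd := fun z (hz : r z ≠ 0) => (push_apply_pos hr Prod.snd hz).ne'
  calc ent r
      ≤ expect r (fun z => -log (prodDist (push Prod.fst r) (push Prod.snd r) z)) :=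
        ent_le_expect_neg_log hr (isDist_prodDist (isDist_push hr _) (isDist_push hr _))
          fun z hz => mul_ne_zero (hfst z hz) (hsnd z hz)
    _ = expect r (fun z => -log (push Prod.fst r z.1) + -log (push Prod.snd r z.2)) :=
        expect_congr fun z hz => by rw [prodDist, log_mul (hfst z hz) (hsnd z hz), neg_add]
    _ = ent (push Prod.fst r) + ent (push Prod.snd r) := by
        rw [expect_add hr.hasFiniteSupport, ent_push _ hr.hasFiniteSupport,
          ent_push _ hr.hasFiniteSupport]

theorem condEnt_eq_ent_sub {r : A × B → ℝ} (hr : IsDist r) :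
    condEnt r = ent r - ent (push Prod.snd r) := by
  have hfin := hr.hasFiniteSupport
  calc condEnt r
      = expect r (fun z => -log (fiber r z.2 z.1)) := by
        rw [expect_eq_expect_fiber hr]
        exact finsum_congr fun b => by rw [ent_eq_expect]
    _ = expect r (fun z => -log (r z) - -log (push Prod.snd r z.2)) :=
        expect_congr fun z hz => by
          rw [fiber, log_div hz (push_apply_pos hr Prod.snd hz).ne', neg_sub_neg, neg_sub]
    _ = ent r - ent (push Prod.snd r) := by
        rw [expect_sub hfin, ← ent_eq_expect, ← ent_push _ hfin]

theorem condEnt_le_ent_push_fst {r : A × B → ℝ} (hr : IsDist r) :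
    condEnt r ≤ ent (push Prod.fst r) := by
  rw [condEnt_eq_ent_sub hr]
  linarith [ent_le_ent_push_fst_add_ent_push_snd hr]

theorem condEnt_push_prodMap {r : A × B → ℝ} (hr : r.HasFiniteSupport) (f : A → C) :
    condEnt (push (Prod.map f id) r) =
      expect (push Prod.snd r) (fun b => ent (push f (fiber r b))) := by
  simp only [condEnt, fiber_push_prodMap hr, push_push _ _ hr, expect]
  rfl

theorem condEnt_le_condEnt_fst_add_condEnt_snd {r : (A × B) × C → ℝ} (hr : IsDist r) :
    condEnt r ≤ condEnt (push (Prod.map Prod.fst id) r) +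
      condEnt (push (Prod.map Prod.snd id) r) := by
  rw [condEnt_push_prodMap hr.hasFiniteSupport, condEnt_push_prodMap hr.hasFiniteSupport,
    ← expect_add (isDist_push hr _).hasFiniteSupport]
  exact expect_mono (isDist_push hr _) fun c hc =>
    ent_le_ent_push_fst_add_ent_push_snd (isDist_fiber hr hc)

theorem ent_submodular {Ω A B C D : Type*} {p : Ω → ℝ} (hp : IsDist p) {f : Ω → A} {g : Ω → B}
    {j : Ω → C} {k : Ω → D} (hfk : ∀ a b, f a = f b → k a = k b)
    (hgk : ∀ a b, g a = g b → k a = k b) (hj : ∀ a b, j a = j b ↔ f a = f b ∧ g a = g b) :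
    ent (push j p) + ent (push k p) ≤ ent (push f p) + ent (push g p) := by
  have hfin := hp.hasFiniteSupport
  have hcond := condEnt_le_condEnt_fst_add_condEnt_snd
    (isDist_push hp fun ω => ((f ω, g ω), k ω))
  rw [condEnt_eq_ent_sub (isDist_push hp _),
    condEnt_eq_ent_sub (isDist_push (isDist_push hp _) _),
    condEnt_eq_ent_sub (isDist_push (isDist_push hp _) _)] at hcond
  simp only [push_push _ _ hfin] at hcond
  change ent (push (fun ω => ((f ω, g ω), k ω)) p) - ent (push k p) ≤
    ent (push (fun ω => (f ω, k ω)) p) - ent (push k p) +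
      (ent (push (fun ω => (g ω, k ω)) p) - ent (push k p)) at hcond
  rw [ent_push_congr hfin (g := j), ent_push_congr hfin (f := fun ω => (f ω, k ω)) (g := f),
    ent_push_congr hfin (f := fun ω => (g ω, k ω)) (g := g)] at hcond
  · linarith
  all_goals intro a b _ _
  all_goals simp only [Prod.mk.injEq, hj]
  · exact and_iff_left_of_imp (hgk a b)
  · exact and_iff_left_of_imp (hfk a b)
  · exact and_iff_left_of_imp fun h => hfk a b h.1

theorem expect_ent_fiber_sub_ent_push_fiber_le {r : A × B → ℝ} (hr : IsDist r) (f : A → C) :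
    expect (push Prod.snd r) (fun b => ent (fiber r b) - ent (push f (fiber r b))) ≤
      ent (push Prod.fst r) - ent (push f (push Prod.fst r)) := by
  have hfin := hr.hasFiniteSupport
  have hsub := ent_submodular hr (f := Prod.fst) (g := Prod.map f id) (j := id)
    (k := fun z => f z.1) (fun a b h => congrArg f h) (fun a b h => congrArg Prod.fst h)
    fun a b => by
      simp only [id, Prod.ext_iff, Prod.map]
      exact ⟨fun h => ⟨h.1, congrArg f h.1, h.2⟩, fun h => ⟨h.1, h.2.2⟩⟩
  have hcond : expect (push Prod.snd r) (fun b => ent (fiber r b)) = condEnt r := rfl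
  rw [expect_sub (isDist_push hr _).hasFiniteSupport, hcond, ← condEnt_push_prodMap hfin,
    condEnt_eq_ent_sub hr, condEnt_eq_ent_sub (isDist_push hr _), push_push _ _ hfin,
    push_push _ _ hfin]
  rw [push_id] at hsub
  simp only [Function.comp_def, Prod.map_snd, id]
  linarith

end Entropy

section DoublingMass

variable {A B U W : Type*}

theorem finsum_finsum_eq_expect_expect (p : A → ℝ) (q : B → ℝ) (F : A → B → ℝ) :
    ∑ᶠ a, ∑ᶠ b, p a * q b * F a b = expect p (fun a => expect q (F a)) := by
  simp only [expect, mul_assoc, mul_finsum]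

variable [AddCommGroup A]

theorem expect_ent_conv_fiber {r₁ : A × U → ℝ} {r₂ : A × W → ℝ} (hr₁ : IsDist r₁)
    (hr₂ : IsDist r₂) :
    expect (prodDist (push Prod.snd r₁) (push Prod.snd r₂))
        (fun c => ent (conv (fiber r₁ c.1) (fiber r₂ c.2))) =
      ent (push (fun z => (z.1.1 + z.2.1, (z.1.2, z.2.2))) (prodDist r₁ r₂)) -
        (ent (push Prod.snd r₁) + ent (push Prod.snd r₂)) := by
  have hfin₁ := hr₁.hasFiniteSupport
  have hfin₂ := hr₂.hasFiniteSupport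
  have hprod := isDist_prodDist hr₁ hr₂
  have hjoint := isDist_push hprod (Equiv.prodProdProdComm A U A W)
  have hsum := condEnt_push_prodMap hjoint.hasFiniteSupport fun z => z.1 + z.2
  have hsnd := push_prodProdProdComm_prodDist_snd hfin₁ hfin₂
  rw [condEnt_eq_ent_sub (isDist_push hjoint _), push_push _ _ hjoint.hasFiniteSupport,
    push_push _ _ hprod.hasFiniteSupport, show Prod.snd ∘ Prod.map (fun z : A × A => z.1 + z.2)
      (id : U × W → U × W) = Prod.snd from rfl, hsnd,
    ent_prodDist (isDist_push hr₁ _) (isDist_push hr₂ _)] at hsum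
  refine Eq.trans (expect_congr fun c _ => ?_) hsum.symm
  rw [fiber_push_prodProdProdComm_prodDist hfin₁ hfin₂,
    conv_eq_push (hasFiniteSupport_fiber hfin₁ _) (hasFiniteSupport_fiber hfin₂ _)]

theorem sCond_eq_ent_sub {r₁ : A × U → ℝ} {r₂ : A × W → ℝ} (hr₁ : IsDist r₁) (hr₂ : IsDist r₂) :
    sCond r₁ r₂ = ent r₁ + ent r₂ -
      ent (push (fun z => (z.1.1 + z.2.1, (z.1.2, z.2.2))) (prodDist r₁ r₂)) := by
  have hP₁ := isDist_push hr₁ Prod.snd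
  have hP₂ := isDist_push hr₂ Prod.snd
  have hfin := (isDist_prodDist hP₁ hP₂).hasFiniteSupport
  have hfst : expect (prodDist (push Prod.snd r₁) (push Prod.snd r₂))
      (fun c => ent (fiber r₁ c.1)) = condEnt r₁ := by
    simp only [expect_prodDist hP₁.hasFiniteSupport hP₂.hasFiniteSupport, expect_const hP₂]
    rfl
  have hsnd : expect (prodDist (push Prod.snd r₁) (push Prod.snd r₂))
      (fun c => ent (fiber r₂ c.2)) = condEnt r₂ := by
    simp only [expect_prodDist hP₁.hasFiniteSupport hP₂.hasFiniteSupport, expect_const hP₁]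
    rfl
  rw [sCond, finsum_finsum_eq_expect_expect,
    ← expect_prodDist hP₁.hasFiniteSupport hP₂.hasFiniteSupport
      fun c => sDouble (fiber r₁ c.1) (fiber r₂ c.2)]
  simp only [sDouble]
  rw [expect_sub hfin, expect_add hfin, hfst, hsnd, expect_ent_conv_fiber hr₁ hr₂,
    condEnt_eq_ent_sub hr₁, condEnt_eq_ent_sub hr₂]
  ring

end DoublingMass

section GraphDist

variable {A B C : Type*} {p q : A → ℝ}

/-- The joint distribution of `(X, f(X))` for `X ∼ p`, used to condition `X` on `f(X)`. -/
def graphDist (f : A → B) (p : A → ℝ) : A × B → ℝ := push (fun a => (a, f a)) p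

theorem condEnt_graphDist (hp : IsDist p) (f : A → B) :
    condEnt (graphDist f p) = ent p - ent (push f p) := by
  rw [graphDist, condEnt_eq_ent_sub (isDist_push hp _), push_push _ _ hp.hasFiniteSupport,
    ent_push_of_injective (fun _ _ h => congrArg Prod.fst h) hp.hasFiniteSupport]
  rfl

theorem sCond_graphDist [AddCommGroup A] (hp : IsDist p) (hq : IsDist q) (f : A → B) (g : A → C) :
    sCond (graphDist f p) (graphDist g q) = ent p + ent q -
      ent (push (fun z => (z.1 + z.2, (f z.1, g z.2))) (prodDist p q)) := by
  have hfinp := hp.hasFiniteSupport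
  have hfinq := hq.hasFiniteSupport
  rw [graphDist, graphDist, sCond_eq_ent_sub (isDist_push hp _) (isDist_push hq _),
    ent_push_of_injective (fun _ _ h => congrArg Prod.fst h) hfinp,
    ent_push_of_injective (fun _ _ h => congrArg Prod.fst h) hfinq,
    ← push_prodMap_prodDist hfinp hfinq, push_push _ _ (hasFiniteSupport_prodDist hfinp hfinq)]
  rfl

end GraphDist

section Uniform

variable {A : Type*} {s : Set A}

theorem isDist_unifOn [Finite s] [Nonempty s] : IsDist (unifOn s) := by
  refine ⟨fun a => Set.indicator_nonneg (fun _ _ => by positivity) a, ?_⟩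
  have hcard : (Nat.card s : ℝ) ≠ 0 := Nat.cast_ne_zero.2 Nat.card_pos.ne'
  simp only [unifOn]
  rw [← finsum_mem_def, finsum_mem_eq_finite_toFinset_sum _ s.toFinite, Finset.sum_const,
    ← Set.ncard_eq_toFinset_card s, nsmul_eq_mul]
  exact mul_inv_cancel₀ hcard

theorem neg_log_unifOn_of_mem {a : A} (ha : a ∈ s) : -log (unifOn s a) = log (Nat.card s) := by
  rw [unifOn, Set.indicator_of_mem ha, log_inv, neg_neg]

theorem ent_unifOn [Finite s] [Nonempty s] : ent (unifOn s) = log (Nat.card s) := by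
  rw [ent_eq_expect, ← expect_const (isDist_unifOn (s := s)) (log _)]
  exact expect_congr fun a ha => neg_log_unifOn_of_mem (Set.mem_of_indicator_ne_zero ha)

theorem ent_le_ent_unifOn [Finite s] {p : A → ℝ} (hp : IsDist p) (hs : p.support ⊆ s) :
    ent p ≤ ent (unifOn s) := by
  obtain ⟨a, ha, -⟩ := exists_le_of_le_expect hp (F := fun _ => 0) (expect_const hp 0).ge
  have : Nonempty s := ⟨a, hs ha⟩
  have hcard : (Nat.card s : ℝ)⁻¹ ≠ 0 := inv_ne_zero (Nat.cast_ne_zero.2 Nat.card_pos.ne')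
  calc ent p
      ≤ expect p (fun b => -log (unifOn s b)) :=
        ent_le_expect_neg_log hp isDist_unifOn fun b hb => by
          rwa [unifOn, Set.indicator_of_mem (hs hb)]
    _ = expect p (fun _ => log (Nat.card s)) :=
        expect_congr fun b hb => neg_log_unifOn_of_mem (hs hb)
    _ = ent (unifOn s) := by rw [expect_const hp, ent_unifOn]

end Uniform

section Submodule

variable {R M : Type*} [Ring R] [AddCommGroup M] [Module R M] {p q : M → ℝ}

theorem mkQ_eq_mkQ_iff_of_add_eq_add (S : Submodule R M) {a b c d : M} (h : a + b = c + d) :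
    S.mkQ a = S.mkQ c ↔ S.mkQ b = S.mkQ d := by
  have hadd := congrArg S.mkQ h
  rw [map_add, map_add] at hadd
  exact ⟨fun hac => by rwa [hac, add_right_inj] at hadd,
    fun hbd => by rwa [hbd, add_left_inj] at hadd⟩

theorem mkQ_eq_mkQ_of_le {S T : Submodule R M} (hST : S ≤ T) {a b : M} (h : S.mkQ a = S.mkQ b) :
    T.mkQ a = T.mkQ b :=
  (Submodule.Quotient.eq T).2 (hST ((Submodule.Quotient.eq S).1 h))

theorem sCond_graphDist_mkQ_le (hp : IsDist p) (hq : IsDist q) (V T : Submodule R M) :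
    sCond (graphDist V.mkQ p) (graphDist V.mkQ q) ≤
      (ent q - ent (push T.mkQ q)) + (ent (push T.mkQ p) - ent (push (T ⊔ V).mkQ p)) := by
  have hpq := isDist_prodDist hp hq
  have hfst := fun S : Submodule R M => push_comp_fst_prodDist hp.hasFiniteSupport hq S.mkQ
  have hsnd : push Prod.snd (prodDist p q) = q :=
    (push_comp_snd_prodDist hp hq.hasFiniteSupport id).trans (push_id q)
  have hsub₁ := ent_submodular hpq (f := Prod.snd)
    (g := fun z => ((z.1 + z.2, V.mkQ z.1), T.mkQ z.2)) (j := id) (k := fun z => T.mkQ z.2)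
    (fun a b h => congrArg T.mkQ h) (fun a b h => congrArg Prod.snd h) fun a b => by
      simp only [id, Prod.mk.injEq]
      refine ⟨fun h => by simp only [h, and_self], fun ⟨h₂, ⟨hadd, _⟩, _⟩ => ?_⟩
      exact Prod.ext (by rwa [h₂, add_left_inj] at hadd) h₂
  have hsub₂ := ent_submodular hpq (f := fun z => (z.1 + z.2, (V.mkQ z.1, V.mkQ z.2)))
    (g := fun z => T.mkQ z.1) (j := fun z => ((z.1 + z.2, V.mkQ z.1), T.mkQ z.2))
    (k := fun z => (T ⊔ V).mkQ z.1)
    (fun a b h => mkQ_eq_mkQ_of_le le_sup_right (Prod.mk.inj (Prod.mk.inj h).2).1)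
    (fun a b h => mkQ_eq_mkQ_of_le le_sup_left h) fun a b => by
      simp only [Prod.mk.injEq]
      have hswap := fun (S : Submodule R M) h =>
        mkQ_eq_mkQ_iff_of_add_eq_add S (a := a.1) (b := a.2) (c := b.1) (d := b.2) h
      exact ⟨fun ⟨⟨hadd, hV⟩, hT⟩ => ⟨⟨hadd, hV, (hswap V hadd).1 hV⟩, (hswap T hadd).2 hT⟩,
        fun ⟨⟨hadd, hV, _⟩, hT⟩ => ⟨⟨hadd, hV⟩, (hswap T hadd).1 hT⟩⟩
  rw [hsnd, push_id, ent_prodDist hp hq,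
    push_comp_snd_prodDist hp hq.hasFiniteSupport T.mkQ] at hsub₁
  rw [hfst, hfst] at hsub₂
  rw [sCond_graphDist hp hq]
  linarith

theorem ent_sub_ent_push_mkQ_le_ent_unifOn (hp : IsDist p) (V : Submodule R M) [Finite V] :
    ent p - ent (push V.mkQ p) ≤ ent (unifOn (V : Set M)) := by
  have hfin := hp.hasFiniteSupport
  let split (x : M) : M × M ⧸ V := (x - (V.mkQ x).out, V.mkQ x)
  have hsplit : split.Injective := fun x y h => by
    obtain ⟨hsub, hmk⟩ := Prod.ext_iff.1 h
    simp only [split] at hsub hmk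
    rwa [hmk, sub_left_inj] at hsub
  have hsupp : (push (fun x => x - (V.mkQ x).out) p).support ⊆ V := fun v hv => by
    obtain ⟨x, rfl, -⟩ := exists_ne_zero_of_finsum_mem_ne_zero hv
    exact (Submodule.Quotient.eq V).1 (V.mkQ x).out_eq.symm
  have hsub := ent_le_ent_push_fst_add_ent_push_snd (isDist_push hp split)
  rw [ent_push_of_injective hsplit hfin, push_push _ _ hfin, push_push _ _ hfin] at hsub
  have hV := ent_le_ent_unifOn (s := (V : Set M)) (isDist_push hp _) hsupp
  simp only [Function.comp_def, split] at hsub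
  linarith

theorem ent_push_mkQ_bot (hp : IsDist p) : ent (push (⊥ : Submodule R M).mkQ p) = ent p :=
  ent_push_of_injective (LinearMap.ker_eq_bot.1 (Submodule.ker_mkQ ⊥)) hp.hasFiniteSupport

theorem sCond_graphDist_mkQ_le_ent_unifOn (hp : IsDist p) (hq : IsDist q) (V : Submodule R M)
    [Finite V] : sCond (graphDist V.mkQ p) (graphDist V.mkQ q) ≤ ent (unifOn (V : Set M)) := by
  have hle := sCond_graphDist_mkQ_le hp hq V ⊥
  rw [ent_push_mkQ_bot hp, ent_push_mkQ_bot hq, bot_sup_eq, sub_self, zero_add] at hle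
  exact hle.trans (ent_sub_ent_push_mkQ_le_ent_unifOn hp V)

theorem sCond_graphDist_mkQ_le_ent (hp : IsDist p) (hq : IsDist q) (V : Submodule R M) :
    sCond (graphDist V.mkQ p) (graphDist V.mkQ q) ≤ ent q := by
  have hle := sCond_graphDist_mkQ_le hp hq V ⊤
  rw [top_sup_eq] at hle
  linarith [ent_nonneg (isDist_push hq (⊤ : Submodule R M).mkQ)]

theorem ent_unifOn_bot : ent (unifOn ((⊥ : Submodule R M) : Set M)) = 0 := by
  rw [Submodule.bot_coe, ent_unifOn, Nat.card_unique, Nat.cast_one, log_one]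

theorem ent_unifOn_nonneg (V : Submodule R M) [Finite V] : 0 ≤ ent (unifOn (V : Set M)) := by
  rw [ent_unifOn]
  exact log_natCast_nonneg _

theorem finite_submodule_sup (S T : Submodule R M) [Finite S] [Finite T] :
    Finite (S ⊔ T : Submodule R M) := by
  change Finite ((S ⊔ T : Submodule R M) : Set M)
  rw [Submodule.coe_sup]
  exact ((S : Set M).toFinite.add (T : Set M).toFinite).to_subtype

theorem ent_unifOn_sup_le (S T : Submodule R M) [Finite S] [Finite T] :
    ent (unifOn ((S ⊔ T : Submodule R M) : Set M)) ≤
      ent (unifOn (S : Set M)) + ent (unifOn (T : Set M)) := by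
  have := finite_submodule_sup S T
  have hpos : ∀ (N : Submodule R M) [Finite N], 0 < (Nat.card (N : Set M) : ℝ) := fun N _ =>
    Nat.cast_pos.2 Nat.card_pos
  rw [ent_unifOn, ent_unifOn, ent_unifOn, ← log_mul (hpos S).ne' (hpos T).ne']
  refine log_le_log (hpos _) ?_
  rw [Submodule.coe_sup]
  exact mod_cast Set.natCard_add_le

end Submodule

section Minimizer

variable {R M : Type*} [Ring R] [AddCommGroup M] [Module R M] {p : M → ℝ}

theorem finite_range_ent_push_mkQ (hp : p.HasFiniteSupport) :
    (Set.range fun T : Submodule R M => ent (push T.mkQ p)).Finite := by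
  let coincide (T : Submodule R M) : Set (M × M) :=
    {z | (p z.1 ≠ 0 ∧ p z.2 ≠ 0) ∧ T.mkQ z.1 = T.mkQ z.2}
  have hfactors : (fun T : Submodule R M => ent (push T.mkQ p)).FactorsThrough coincide :=
    fun S T h => ent_push_congr hp fun a b ha hb => by
      have hab : (a, b) ∈ coincide S ↔ (a, b) ∈ coincide T := by rw [h]
      simpa only [coincide, Set.mem_ofPred_eq, ha, hb, ne_eq, not_false_eq_true, and_self,
        true_and] using hab
  obtain ⟨e, he⟩ := (Function.factorsThrough_iff _).1 hfactors
  have hfin : (Set.range coincide).Finite :=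
    (hp.prod hp).finite_subsets.subset (Set.range_subset_iff.2 fun T z hz => hz.1)
  rw [he, Set.range_comp]
  exact hfin.image e

/- `M` may have infinitely many finite submodules; a minimum exists because the values lie in the
monotone image of a product of a finite set with `ℕ`, which is partially well-ordered. -/
theorem exists_forall_ent_push_mkQ_add_le (hp : p.HasFiniteSupport) {l : ℝ} (hl : 0 ≤ l) :
    ∃ T : Submodule R M, Finite T ∧ ∀ S : Submodule R M, Finite S →
      ent (push T.mkQ p) + l * ent (unifOn (T : Set M)) ≤
        ent (push S.mkQ p) + l * ent (unifOn (S : Set M)) := by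
  let cost (T : Submodule R M) : ℝ := ent (push T.mkQ p) + l * ent (unifOn (T : Set M))
  have hmono : Monotone fun z : ℝ × ℕ => z.1 + l * log z.2 := fun z z' h => by
    refine add_le_add h.1 (mul_le_mul_of_nonneg_left ?_ hl)
    obtain h0 | hpos := z.2.eq_zero_or_pos
    · simpa only [h0, Nat.cast_zero, log_zero] using log_natCast_nonneg z'.2
    · exact log_le_log (mod_cast hpos) (mod_cast h.2)
  have hpwo : (cost '' {T | Finite T}).IsPWO := by
    refine Set.IsPWO.mono (((finite_range_ent_push_mkQ (R := R) hp).isPWO.prod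
      (Set.isPWO_of_wellQuasiOrderedLE Set.univ)).image_of_monotone hmono) ?_
    rintro _ ⟨T, hT, rfl⟩
    have : Finite T := hT
    exact ⟨(ent (push T.mkQ p), Nat.card (T : Set M)), ⟨⟨T, rfl⟩, trivial⟩, by
      simp only [cost, ent_unifOn]⟩
  obtain ⟨T, hT, hmin⟩ := hpwo.exists_minimalFor cost {T | Finite T}
    ⟨⊥, inferInstanceAs (Finite (⊥ : Submodule R M))⟩
  exact ⟨T, hT, fun S hS => (le_total (cost T) (cost S)).elim id (hmin hS)⟩

theorem exists_ent_push_mkQ_sub_le (hp : IsDist p) {l : ℝ} (hl : 0 ≤ l) :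
    ∃ T : Submodule R M, Finite T ∧ l * ent (unifOn (T : Set M)) ≤ ent p ∧
      ∀ V : Submodule R M, Finite V →
        ent (push T.mkQ p) - ent (push (T ⊔ V).mkQ p) ≤ l * ent (unifOn (V : Set M)) := by
  obtain ⟨T, hT, hmin⟩ := exists_forall_ent_push_mkQ_add_le (R := R) hp.hasFiniteSupport hl
  refine ⟨T, hT, ?_, fun V hV => ?_⟩
  · have hle := hmin ⊥ inferInstance
    rw [ent_push_mkQ_bot hp, ent_unifOn_bot] at hle
    linarith [ent_nonneg (isDist_push hp T.mkQ)]
  · have hle := hmin (T ⊔ V) (finite_submodule_sup T V)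
    have hsup := mul_le_mul_of_nonneg_left (ent_unifOn_sup_le T V) hl
    linarith

end Minimizer

section LocalToGlobal

variable {R M U W : Type*} [Ring R] [AddCommGroup M] [Module R M]

/-- The mean doubling mass `𝔼_w s[X | π_{V(w)}(X) ; Y_w | π_{V(w)}(Y_w)]` for `X ∼ p` and
`(Y, W) ∼ r`, which is what the hypothesis of the theorem averages over `u` with `X = X_u`. -/
def meanDoubling (V : W → Submodule R M) (p : M → ℝ) (r : M × W → ℝ) : ℝ :=
  expect (push Prod.snd r) fun w => sCond (graphDist (V w).mkQ p) (graphDist (V w).mkQ (fiber r w))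

/-- The mean entropy `𝔼_w H[𝐔_{V(w)}]` for `W ∼ P`. -/
def meanUnifEnt (V : W → Submodule R M) (P : W → ℝ) : ℝ :=
  expect P fun w => ent (unifOn (V w : Set M))

section OneFiber

variable {p : M → ℝ} {r : M × W → ℝ}

theorem meanDoubling_le (hp : IsDist p) (hr : IsDist r) (V : W → Submodule R M)
    (T : Submodule R M) :
    meanDoubling V p r ≤ condEnt (graphDist T.mkQ (push Prod.fst r)) +
      expect (push Prod.snd r) (fun w => ent (push T.mkQ p) - ent (push (T ⊔ V w).mkQ p)) := by
  have hP := isDist_push hr Prod.snd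
  rw [condEnt_graphDist (isDist_push hr _)]
  refine (expect_mono hP fun w hw =>
    sCond_graphDist_mkQ_le hp (isDist_fiber hr hw) (V w) T).trans ?_
  rw [expect_add hP.hasFiniteSupport]
  exact add_le_add_left (expect_ent_fiber_sub_ent_push_fiber_le hr T.mkQ) _

theorem meanDoubling_le_ent (hp : IsDist p) (hr : IsDist r) (V : W → Submodule R M) :
    meanDoubling V p r ≤ ent (push Prod.fst r) :=
  (expect_mono (isDist_push hr _) fun w hw =>
    sCond_graphDist_mkQ_le_ent hp (isDist_fiber hr hw) (V w)).trans (condEnt_le_ent_push_fst hr)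

theorem meanDoubling_le_meanUnifEnt (hp : IsDist p) (hr : IsDist r) (V : W → Submodule R M)
    [∀ w, Finite (V w)] : meanDoubling V p r ≤ meanUnifEnt V (push Prod.snd r) :=
  expect_mono (isDist_push hr _) fun w hw =>
    sCond_graphDist_mkQ_le_ent_unifOn hp (isDist_fiber hr hw) (V w)

theorem exists_meanDoubling_sub_le (hp : IsDist p) (hr : IsDist r) (V : W → Submodule R M)
    [∀ w, Finite (V w)] {l : ℝ} (hl : 0 ≤ l) :
    ∃ T : Submodule R M, Finite T ∧ l * ent (unifOn (T : Set M)) ≤ ent p ∧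
      meanDoubling V p r - l * meanUnifEnt V (push Prod.snd r) ≤
        condEnt (graphDist T.mkQ (push Prod.fst r)) := by
  obtain ⟨T, hT, hcard, hmin⟩ := exists_ent_push_mkQ_sub_le (R := R) hp hl
  refine ⟨T, hT, hcard, ?_⟩
  have hle := meanDoubling_le hp hr V T
  have hloss := expect_mono (isDist_push hr Prod.snd) fun w _ => hmin (V w) inferInstance
  rw [expect_const_mul] at hloss
  rw [meanUnifEnt]
  linarith

theorem meanUnifEnt_nonneg (V : W → Submodule R M) [∀ w, Finite (V w)] {P : W → ℝ}
    (hP : ∀ w, 0 ≤ P w) : 0 ≤ meanUnifEnt V P :=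
  expect_nonneg hP fun w => ent_unifOn_nonneg (V w)

end OneFiber

variable {r₁ : M × U → ℝ} {r₂ : M × W → ℝ} (V : U → W → Submodule R M)

theorem exists_le_meanDoubling_fiber (h₁ : IsDist r₁) {ζ s l : ℝ} (hζ : 0 ≤ ζ)
    (hX : condEnt r₁ ≤ s)
    (hmass : ζ * s ≤ expect (push Prod.snd r₁) fun u => meanDoubling (V u) (fiber r₁ u) r₂)
    (hcost : l * expect (push Prod.snd r₁) (fun u => meanUnifEnt (V u) (push Prod.snd r₂)) ≤
      ζ / 4 * s) :
    ∃ u, push Prod.snd r₁ u ≠ 0 ∧ ζ / 4 * s ≤ meanDoubling (V u) (fiber r₁ u) r₂ -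
      (l * meanUnifEnt (V u) (push Prod.snd r₂) + ζ / 2 * ent (fiber r₁ u)) := by
  have hP := isDist_push h₁ Prod.snd
  refine exists_le_of_le_expect hP ?_
  rw [expect_sub hP.hasFiniteSupport, expect_add hP.hasFiniteSupport, expect_const_mul,
    expect_const_mul]
  have hX' := mul_le_mul_of_nonneg_left hX (div_nonneg hζ zero_le_two)
  change ζ / 2 * expect _ (fun u => ent (fiber r₁ u)) ≤ _ at hX'
  linarith

theorem exists_submodule_of_le_expect_meanDoubling [∀ u w, Finite (V u w)] (h₁ : IsDist r₁)
    (h₂ : IsDist r₂) {ζ s : ℝ} (hζ : 0 < ζ) (hs : 0 < s) (hX : ent (push Prod.fst r₁) ≤ s)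
    (hY : ent (push Prod.fst r₂) ≤ s)
    (hmass : ζ * s ≤ expect (push Prod.snd r₁) fun u => meanDoubling (V u) (fiber r₁ u) r₂) :
    ∃ T : Submodule R M, Finite T ∧
      ent (unifOn (T : Set M)) ≤ 8 / ζ ^ 2 *
        expect (push Prod.snd r₁) (fun u => meanUnifEnt (V u) (push Prod.snd r₂)) ∧
      ζ / 4 * s ≤ condEnt (graphDist T.mkQ (push Prod.fst r₂)) := by
  set E := expect (push Prod.snd r₁) fun u => meanUnifEnt (V u) (push Prod.snd r₂)
  have hE : 0 < E := (mul_pos hζ hs).trans_le <| hmass.trans <|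
    expect_mono (isDist_push h₁ _) fun u hu =>
      meanDoubling_le_meanUnifEnt (isDist_fiber h₁ hu) h₂ (V u)
  let l := ζ * s / (4 * E)
  have hl : 0 < l := by positivity
  obtain ⟨u, hu, hgood⟩ := exists_le_meanDoubling_fiber V h₁ hζ.le
    ((condEnt_le_ent_push_fst h₁).trans hX) hmass (l := l) (by simp only [l]; field_simp; rfl)
  have hXu := isDist_fiber h₁ hu
  obtain ⟨T, hT, hcard, hmin⟩ := exists_meanDoubling_sub_le hXu h₂ (V u) hl.le
  have hXu_nonneg := mul_nonneg (half_pos hζ).le (ent_nonneg hXu)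
  refine ⟨T, hT, ?_, by linarith⟩
  have hXu_le : ζ / 2 * ent (fiber r₁ u) ≤ s := by
    have := meanDoubling_le_ent hXu h₂ (V u)
    have := mul_nonneg hl.le (meanUnifEnt_nonneg (V u) (isDist_push h₂ Prod.snd).1)
    have : 0 ≤ ζ / 4 * s := by positivity
    linarith
  calc ent (unifOn (T : Set M))
      ≤ ent (fiber r₁ u) / l := (le_div_iff₀' hl).2 hcard
    _ ≤ s / (ζ / 2) / l := by gcongr; exact (le_div_iff₀' (half_pos hζ)).2 hXu_le
    _ = 8 / ζ ^ 2 * E := by simp only [l]; field_simp; norm_num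

theorem statement17_general (r1 : M × U → ℝ) (r2 : M × W → ℝ) (h1 : IsDist r1) (h2 : IsDist r2)
    (ζ : ℝ) (hζ : 0 < ζ) (V : U → W → Submodule R M) [∀ u w, Finite (V u w)]
    (hV : (∑ᶠ u, ∑ᶠ w, push Prod.snd r1 u * push Prod.snd r2 w *
        sCond (graphDist (V u w).mkQ (fiber r1 u)) (graphDist (V u w).mkQ (fiber r2 w))) ≥
      ζ * (ent (push Prod.fst r1) + ent (push Prod.fst r2))) :
    ∃ Vb : Submodule R M, Finite Vb ∧
      ent (unifOn (Vb : Set M)) ≤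
        8 / ζ ^ 2 *
          ∑ᶠ u, ∑ᶠ w, push Prod.snd r1 u * push Prod.snd r2 w *
            ent (unifOn (V u w : Set M)) ∧
      condEnt (graphDist Vb.mkQ (push Prod.fst r2)) ≥
        ζ / 4 * (ent (push Prod.fst r1) + ent (push Prod.fst r2)) := by
  rw [finsum_finsum_eq_expect_expect] at hV ⊢
  have hX := ent_nonneg (isDist_push h1 Prod.fst)
  have hY := ent_nonneg (isDist_push h2 Prod.fst)
  obtain hpos | hzero := (add_nonneg hX hY).lt_or_eq
  · exact exists_submodule_of_le_expect_meanDoubling V h1 h2 hζ hpos (by linarith) (by linarith) hV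
  · refine ⟨⊥, inferInstance, ?_, ?_⟩
    · rw [ent_unifOn_bot]
      exact mul_nonneg (by positivity) (expect_nonneg (isDist_push h1 _).1 fun u =>
        meanUnifEnt_nonneg (V u) (isDist_push h2 _).1)
    · rw [condEnt_graphDist (isDist_push h2 _), ent_push_mkQ_bot (isDist_push h2 _), ← hzero,
        sub_self, mul_zero]

end LocalToGlobal

/-- **Local to global structure.** -/
theorem statement17 (n : ℕ) {U W : Type*} (r1 : Fvec n × U → ℝ) (r2 : Fvec n × W → ℝ)
    (h1 : IsDist r1) (h2 : IsDist r2) (ζ : ℝ) (hζ : 0 < ζ)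
    (V : U → W → Submodule (ZMod 2) (Fvec n))
    (hV : (∑ᶠ u, ∑ᶠ w, push Prod.snd r1 u * push Prod.snd r2 w *
        sCond (push (fun x => (x, (V u w).mkQ x)) (fiber r1 u))
          (push (fun y => (y, (V u w).mkQ y)) (fiber r2 w))) ≥
      ζ * (ent (push Prod.fst r1) + ent (push Prod.fst r2))) :
    ∃ Vb : Submodule (ZMod 2) (Fvec n),
      ent (unifOn (Vb : Set (Fvec n))) ≤
        8 / ζ ^ 2 *
          ∑ᶠ u, ∑ᶠ w, push Prod.snd r1 u * push Prod.snd r2 w *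
            ent (unifOn ((V u w) : Set (Fvec n))) ∧
      condEnt (selfProj Vb (push Prod.fst r2)) ≥
        ζ / 4 * (ent (push Prod.fst r1) + ent (push Prod.fst r2)) := by
  obtain ⟨Vb, -, hcard, hcond⟩ := statement17_general r1 r2 h1 h2 ζ hζ V hV
  exact ⟨Vb, hcard, hcond⟩
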